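/- arXiv:2508.18461 — 2 statements merged into one kernel-verified Lean document; each statement's English description precedes it below -/
import Mathlib

section
/- Let C be a strong divisibility sequence, let p be an ideal prime for C with parameter s = s(p), let k ≥ 2, and write α = α(p). Let n = α·n' + r with 0 ≤ r < α, and let (m_1, …, m_k) be nonnegative integers with m_1 + ⋯ + m_k = n; write m_i = α·m_i' + r_i with 0 ≤ r_i < α, and set λ = n' − (m_1' + ⋯ + m_k'). Then ν_p(binom(n; m_1,…,m_k)_C) = s·λ + ν_p(n!/(n'−λ)! evaluated as ν_p(n'!/(n'−λ)!)) + ν_p((n'−λ)!/(m_1'!⋯m_k'!)); that is, ν_p(binom(n; m_1,…,m_k)_C) = s·λ + ν_p(n'!) − Σ_{i=1}^k ν_p(m_i'!). -/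
open Finset

/-- A strong divisibility sequence: nonzero integers `Cs 1, Cs 2, ...` with
`gcd (Cs n) (Cs m) = |Cs (gcd n m)|`. -/
def IsStrongDivSeq (Cs : ℕ → ℤ) : Prop :=
  (∀ n, 1 ≤ n → Cs n ≠ 0) ∧
  ∀ m n, 1 ≤ m → 1 ≤ n → Int.gcd (Cs n) (Cs m) = (Cs (Nat.gcd n m)).natAbs

/-- `a` is the rank of apparition of `m` in the sequence `Cs`:
the least index `j ≥ 1` such that `m ∣ Cs j`. -/
def IsRank (Cs : ℕ → ℤ) (m a : ℕ) : Prop :=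
  1 ≤ a ∧ (m : ℤ) ∣ Cs a ∧ ∀ j, 1 ≤ j → (m : ℤ) ∣ Cs j → a ≤ j

/-- The `C`-orial: `0!_C = 1`, `n!_C = Cs 1 * Cs 2 * ⋯ * Cs n`. -/
def Corial (Cs : ℕ → ℤ) : ℕ → ℤ
  | 0 => 1
  | n + 1 => Corial Cs n * Cs (n + 1)

/-- `p` is an ideal prime for `Cs`, with `α k` the rank of apparition of `p ^ k`
and parameter `s = s(p)`. -/
def IdealPrime (Cs : ℕ → ℤ) (p : ℕ) (α : ℕ → ℕ) (s : ℕ) : Prop :=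
  1 ≤ s ∧ (∀ k, 1 ≤ k → IsRank Cs (p ^ k) (α k)) ∧
  (∀ k, 1 ≤ k → k ≤ s → α k = α 1) ∧
  (∀ k, s < k → α k = p ^ (k - s) * α 1)

/-- The `p`-adic valuation of the `C`-multinomial coefficient,
defined as `ν_p(n!_C) - ∑_i ν_p(m_i!_C)` (an integer). -/
def nuCmulti (p : ℕ) (Cs : ℕ → ℤ) {k : ℕ} (n : ℕ) (m : Fin k → ℕ) : ℤ :=
  (padicValInt p (Corial Cs n) : ℤ) - ∑ i, (padicValInt p (Corial Cs (m i)) : ℤ)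

/-- `T_{p,k,C}(n, x)`: the generating polynomial counting `C`-multinomial coefficients
with `k` parts and top index `n` by their `p`-adic valuations. -/
noncomputable def TmultiC (p k : ℕ) (Cs : ℕ → ℤ) (n : ℕ) : Polynomial ℤ :=
  ∑ m ∈ Finset.Nat.antidiagonalTuple k n, Polynomial.X ^ (nuCmulti p Cs n m).toNat

/-- `T_{p,k}(n, x)`: the generating polynomial counting ordinary multinomial coefficients
with `k` parts and top index `n` by their `p`-adic valuations. -/
noncomputable def TmultiOrd (p k n : ℕ) : Polynomial ℤ :=
  ∑ m ∈ Finset.Nat.antidiagonalTuple k n,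
    Polynomial.X ^ (padicValNat p (Nat.multinomial Finset.univ m))

/-- `T_{p,k,λ}(n, x)`: `0` if `n < λ`, and
`x^(ν_p(n!/(n-λ)!) + λ) · T_{p,k}(n - λ, x)` otherwise. -/
noncomputable def TmultiLam (p k lam n : ℕ) : Polynomial ℤ :=
  if n < lam then 0
  else Polynomial.X ^ ((padicValNat p (Nat.factorial n)
      - padicValNat p (Nat.factorial (n - lam))) + lam) * TmultiOrd p k (n - lam)

lemma dvd_iff_rank {Cs : ℕ → ℤ} (hC : IsStrongDivSeq Cs) {q a : ℕ} (h : IsRank Cs q a)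
    {j : ℕ} (hj : 1 ≤ j) : (q : ℤ) ∣ Cs j ↔ a ∣ j := by
  obtain ⟨ha, hd, hmin⟩ := h
  have key := hC.2 a j ha hj
  have hg : 1 ≤ Nat.gcd j a := Nat.gcd_pos_of_pos_left _ hj
  constructor
  · intro hq
    have h1 : (q : ℤ) ∣ (Int.gcd (Cs j) (Cs a) : ℤ) := Int.dvd_coe_gcd hq hd
    rw [key] at h1
    have h2 : (q : ℤ) ∣ Cs (Nat.gcd j a) := Int.dvd_natAbs.mp h1
    have h3 := hmin _ hg h2
    have h4 : Nat.gcd j a = a := le_antisymm (Nat.le_of_dvd ha (Nat.gcd_dvd_right _ _)) h3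
    rw [← h4]
    exact Nat.gcd_dvd_left _ _
  · intro haj
    rw [Nat.gcd_eq_right haj] at key
    have h1 : ((Int.gcd (Cs j) (Cs a) : ℕ) : ℤ) ∣ Cs j := Int.gcd_dvd_left _ _
    rw [key] at h1
    exact hd.trans (Int.natAbs_dvd.mp h1)

lemma padicValInt_eq_of_dvd {p : ℕ} (hp : p.Prime) {z : ℤ} (hz : z ≠ 0) {v : ℕ}
    (h1 : ((p ^ v : ℕ) : ℤ) ∣ z) (h2 : ¬ ((p ^ (v + 1) : ℕ) : ℤ) ∣ z) : padicValInt p z = v := by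
  haveI := Fact.mk hp
  push_cast at h1 h2
  rw [padicValInt_dvd_iff] at h1 h2
  simp only [hz, false_or] at h1 h2
  omega

lemma val_not_dvd {Cs : ℕ → ℤ} {p : ℕ} (hp : p.Prime) {α : ℕ → ℕ} {s : ℕ}
    (hC : IsStrongDivSeq Cs) (hid : IdealPrime Cs p α s) {j : ℕ} (hj : 1 ≤ j)
    (h : ¬ α 1 ∣ j) : padicValInt p (Cs j) = 0 := by
  apply padicValInt_eq_of_dvd hp (hC.1 j hj)
  · simp
  · rw [dvd_iff_rank hC (hid.2.1 1 le_rfl) hj]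
    exact h

lemma val_dvd {Cs : ℕ → ℤ} {p : ℕ} (hp : p.Prime) {α : ℕ → ℕ} {s : ℕ}
    (hC : IsStrongDivSeq Cs) (hid : IdealPrime Cs p α s) {t : ℕ} (ht : 1 ≤ t) :
    padicValInt p (Cs (α 1 * t)) = s + padicValNat p t := by
  haveI := Fact.mk hp
  obtain ⟨hs, hr, hlow, hhigh⟩ := hid
  have ha : 1 ≤ α 1 := (hr 1 le_rfl).1
  have hj : 1 ≤ α 1 * t := Nat.mul_pos ha ht
  have ht0 : t ≠ 0 := by omega
  apply padicValInt_eq_of_dvd hp (hC.1 _ hj)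
  · rw [dvd_iff_rank hC (hr _ (by omega)) hj]
    rcases Nat.eq_zero_or_pos (padicValNat p t) with h | h
    · rw [h, Nat.add_zero, hlow s hs le_rfl]
      exact dvd_mul_right _ _
    · rw [hhigh _ (by omega), Nat.add_sub_cancel_left, mul_comm]
      exact Nat.mul_dvd_mul_left _ pow_padicValNat_dvd
  · rw [dvd_iff_rank hC (hr _ (by omega)) hj, hhigh _ (by omega),
      show s + padicValNat p t + 1 - s = padicValNat p t + 1 by omega, mul_comm]
    intro h
    exact pow_succ_padicValNat_not_dvd ht0 (Nat.dvd_of_mul_dvd_mul_left ha h)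

lemma Corial_ne_zero {Cs : ℕ → ℤ} (hC : IsStrongDivSeq Cs) (N : ℕ) : Corial Cs N ≠ 0 := by
  induction N with
  | zero => simp [Corial]
  | succ N ih => exact mul_ne_zero ih (hC.1 _ (by omega))

lemma val_Corial {Cs : ℕ → ℤ} {p : ℕ} (hp : p.Prime) {α : ℕ → ℕ} {s : ℕ}
    (hC : IsStrongDivSeq Cs) (hid : IdealPrime Cs p α s) (N : ℕ) :
    padicValInt p (Corial Cs N) = s * (N / α 1) + padicValNat p (Nat.factorial (N / α 1)) := by
  haveI := Fact.mk hp
  have ha : 1 ≤ α 1 := (hid.2.1 1 le_rfl).1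
  induction N with
  | zero => simp [Corial]
  | succ N ih =>
    rw [Corial, padicValInt.mul (Corial_ne_zero hC N) (hC.1 _ (by omega)), ih, Nat.succ_div]
    split_ifs with h
    · have h2 : N + 1 = α 1 * (N / α 1 + 1) := by
        have := Nat.div_mul_cancel h
        rw [Nat.succ_div, if_pos h] at this
        rw [mul_comm, this]
      have h3 : padicValInt p (Cs (N + 1)) = s + padicValNat p (N / α 1 + 1) := by
        rw [h2, val_dvd hp hC hid (Nat.succ_le_succ (Nat.zero_le _))]
      rw [h3, Nat.factorial_succ, padicValNat.mul (Nat.succ_ne_zero _) (Nat.factorial_ne_zero _)]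
      ring
    · rw [val_not_dvd hp hC hid (by omega) h]
      simp

theorem stmt12 (Cs : ℕ → ℤ) (p : ℕ) (hp : p.Prime) (α : ℕ → ℕ) (s : ℕ)
    (hC : IsStrongDivSeq Cs) (hid : IdealPrime Cs p α s)
    (k : ℕ) (hk : 2 ≤ k) (n n' r : ℕ) (m m' rr : Fin k → ℕ)
    (hn : n = α 1 * n' + r) (hr : r < α 1)
    (hm : ∀ i, m i = α 1 * m' i + rr i) (hri : ∀ i, rr i < α 1)
    (hsum : ∑ i, m i = n) :
    nuCmulti p Cs n m =
      (s : ℤ) * ((n' : ℤ) - ∑ i, (m' i : ℤ))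
        + (padicValNat p (Nat.factorial n') : ℤ)
        - ∑ i, (padicValNat p (Nat.factorial (m' i)) : ℤ) := by
  have ha : 0 < α 1 := (hid.2.1 1 le_rfl).1
  have h1 : n / α 1 = n' := by
    rw [hn, Nat.mul_add_div ha, Nat.div_eq_of_lt hr, Nat.add_zero]
  have h2 : ∀ i, m i / α 1 = m' i := fun i => by
    rw [hm i, Nat.mul_add_div ha, Nat.div_eq_of_lt (hri i), Nat.add_zero]
  unfold nuCmulti
  simp only [val_Corial hp hC hid, h1, h2]
  push_cast
  rw [Finset.sum_add_distrib, ← Finset.mul_sum]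
  ring
end

section
/- Let C be a strong divisibility sequence and let p be an acceptable prime for C with parameter s = s(p). Then for every integer n ≥ 0, ν_p(n!_C) = Σ_{k=1}^{s} ⌊n / α(p^k)⌋ + ν_p(⌊n / α(p^s)⌋!). -/
open Finset

/-- `p` is an acceptable prime for `Cs`, with `α k` the rank of apparition of `p ^ k`
and parameter `s = s(p)`. -/
def AcceptablePrime (Cs : ℕ → ℤ) (p : ℕ) (α : ℕ → ℕ) (s : ℕ) : Prop :=
  1 ≤ s ∧ (∀ k, 1 ≤ k → IsRank Cs (p ^ k) (α k)) ∧
  (∀ k, s < k → α k = p ^ (k - s) * α s)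

lemma rank_dvd_iff (Cs : ℕ → ℤ) (hC : IsStrongDivSeq Cs) (q a : ℕ) (h : IsRank Cs q a)
    (m : ℕ) (hm : 1 ≤ m) : (q : ℤ) ∣ Cs m ↔ a ∣ m := by
  obtain ⟨ha, hd, hmin⟩ := h
  have hg := hC.2 a m ha hm
  constructor
  · intro hq
    have h1 : (q : ℤ) ∣ (Int.gcd (Cs m) (Cs a) : ℤ) := Int.dvd_coe_gcd hq hd
    rw [hg, Int.dvd_natAbs] at h1
    have h2 := hmin _ (Nat.gcd_pos_of_pos_left _ hm) h1
    have h3 : Nat.gcd m a = a := le_antisymm (Nat.le_of_dvd ha (Nat.gcd_dvd_right m a)) h2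
    rw [← h3]
    exact Nat.gcd_dvd_left m a
  · intro hdm
    rw [Nat.gcd_eq_right hdm] at hg
    have h1 : (Int.gcd (Cs m) (Cs a) : ℤ) ∣ Cs m := Int.gcd_dvd_left _ _
    rw [hg, Int.natAbs_dvd] at h1
    exact hd.trans h1

lemma val_term (Cs : ℕ → ℤ) (p : ℕ) (hp : p.Prime) (α : ℕ → ℕ) (s : ℕ)
    (hC : IsStrongDivSeq Cs) (hacc : AcceptablePrime Cs p α s) (m : ℕ) (hm : 1 ≤ m) :
    padicValInt p (Cs m) =
      (∑ k ∈ Finset.Icc 1 s, if α k ∣ m then 1 else 0) +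
        (if α s ∣ m then padicValNat p (m / α s) else 0) := by
  haveI : Fact p.Prime := ⟨hp⟩
  obtain ⟨hs, hr, hbig⟩ := hacc
  have hne := hC.1 m hm
  have key : ∀ k, 1 ≤ k → (k ≤ padicValInt p (Cs m) ↔ α k ∣ m) := by
    intro k hk
    rw [← rank_dvd_iff Cs hC _ _ (hr k hk) m hm]
    push_cast
    rw [padicValInt_dvd_iff]
    simp [hne]
  have hpos := (hr s hs).1
  have hsum : (∑ k ∈ Finset.Icc 1 s, if α k ∣ m then 1 else 0)
      = min s (padicValInt p (Cs m)) := by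
    rw [← Finset.card_filter]
    have : (Finset.Icc 1 s).filter (fun k => α k ∣ m)
        = Finset.Icc 1 (min s (padicValInt p (Cs m))) := by
      ext k
      simp only [Finset.mem_filter, Finset.mem_Icc, le_min_iff]
      constructor
      · rintro ⟨⟨h1, h2⟩, h3⟩
        exact ⟨h1, h2, (key k h1).2 h3⟩
      · rintro ⟨h1, h2, h3⟩
        exact ⟨⟨h1, h2⟩, (key k h1).1 h3⟩
    rw [this]; simp
  rw [hsum]
  split_ifs with h
  · have hv := (key s hs).2 h
    rw [min_eq_left hv]
    obtain ⟨q, rfl⟩ := h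
    have hq : q ≠ 0 := by rintro rfl; simp at hm
    rw [Nat.mul_div_cancel_left _ hpos]
    have key2 : ∀ j, 1 ≤ j → (s + j ≤ padicValInt p (Cs (α s * q)) ↔ j ≤ padicValNat p q) := by
      intro j hj
      rw [key (s + j) (by omega), hbig (s + j) (by omega), mul_comm (α s) q,
        Nat.mul_dvd_mul_iff_right hpos, padicValNat_dvd_iff]
      simp [hq]
    have h1 := key2 (padicValNat p q + 1) (by omega)
    by_cases h0 : padicValNat p q = 0
    · rw [h0] at h1 ⊢; omega
    · have h2 := key2 (padicValNat p q) (by omega)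
      omega
  · have hv : ¬ s ≤ padicValInt p (Cs m) := fun hh => h ((key s hs).1 hh)
    omega

lemma corial_ne_zero (Cs : ℕ → ℤ) (hC : IsStrongDivSeq Cs) (n : ℕ) : Corial Cs n ≠ 0 := by
  induction n with
  | zero => simp [Corial]
  | succ n ih => exact mul_ne_zero ih (hC.1 _ (by omega))

theorem stmt13 (Cs : ℕ → ℤ) (p : ℕ) (hp : p.Prime) (α : ℕ → ℕ) (s : ℕ)
    (hC : IsStrongDivSeq Cs) (hacc : AcceptablePrime Cs p α s) (n : ℕ) :
    padicValInt p (Corial Cs n) =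
      (∑ k ∈ Finset.Icc 1 s, n / α k) + padicValNat p (Nat.factorial (n / α s)) := by
  haveI : Fact p.Prime := ⟨hp⟩
  induction n with
  | zero => simp [Corial]
  | succ n ih =>
    rw [Corial, padicValInt.mul (corial_ne_zero Cs hC n) (hC.1 _ (by omega)), ih,
      val_term Cs p hp α s hC hacc (n + 1) (by omega)]
    simp only [Nat.succ_div, Finset.sum_add_distrib]
    split_ifs with h
    · rw [Nat.factorial_succ, padicValNat.mul (Nat.succ_ne_zero _) (Nat.factorial_ne_zero _)]
      ring
    · simp only [add_zero]
      ring
end
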